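/- arXiv:math-ph/0212078 — 2 statements merged into one kernel-verified Lean document; each statement's English description precedes it below -/
import Mathlib

section
/- For α > 2, γ > 0 and β > 0, the function u(x) = g·(|x⊥|^{2α/β} + |x₃|^{2γ/β})^{-β/2} on ℝ³ (where x⊥ = (x₁,x₂) and g > 0) is integrable over the complement of any ball around the origin if and only if γ > α/(α-2). -/
open MeasureTheory Real Filter

/-- The anisotropic model potential `u(x) = g (|x⊥|^{2α/β} + |x₃|^{2γ/β})^{-β/2}`. -/
noncomputable def uFun (g α β γ : ℝ) (x : EuclideanSpace ℝ (Fin 3)) : ℝ :=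
  g * (Real.sqrt ((x 0) ^ 2 + (x 1) ^ 2) ^ (2 * α / β) + |x 2| ^ (2 * γ / β)) ^ (-(β / 2))

/-!
The function `N x = |x⊥|^a + |x₃|^b` is homogeneous of degree one under the anisotropic dilations
`δ t (x⊥, x₃) = (t^(1/a) x⊥, t^(1/b) x₃)`, whose Jacobian is `t ^ Q` with `Q = 2/a + 1/b`. Hence the
sublevel set `{N ≤ t}` has volume proportional to `t ^ Q`, so that `N ^ Q` pushes Lebesgue measure
forward to a multiple of Lebesgue measure on the half-line. Integrability of `N ^ (-s)` at infinity
is therefore that of `t ^ (-s / Q)`, i.e. `Q < s`. With `a = 2α/β`, `b = 2γ/β` and `s = β/2` this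
reads `2/α + 1/γ < 1`.
-/

section LinearVolumeGrowth

open scoped ENNReal

variable {X : Type*} [MeasurableSpace X] {μ : Measure X} {M : X → ℝ} {c : ℝ≥0∞} {T : ℝ}

theorem measure_preimage_Ioc_of_measure_sublevel (hM : Measurable M) (hc : c ≠ ∞)
    (hvol : ∀ t, 0 < t → μ {x | M x ≤ t} = ENNReal.ofReal t * c) {a b : ℝ} (ha : 0 < a)
    (hab : a ≤ b) : μ (M ⁻¹' Set.Ioc a b) = ENNReal.ofReal (b - a) * c := by
  have hdiff : M ⁻¹' Set.Ioc a b = {x | M x ≤ b} \ {x | M x ≤ a} := by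
    ext x
    simp [and_comm]
  have hfin : μ {x | M x ≤ a} ≠ ∞ := by
    rw [hvol a ha]
    finiteness
  rw [hdiff, measure_sdiff (Set.ofPred_subset_ofPred.2 fun _ hx ↦ hx.trans hab)
    (measurableSet_le hM measurable_const).nullMeasurableSet hfin, hvol b (ha.trans_le hab),
    hvol a ha, ENNReal.ofReal_sub b ha.le, ENNReal.sub_mul fun _ _ ↦ hc]

theorem restrict_map_Ioi_eq_smul_volume (hM : Measurable M) (hc : c ≠ ∞)
    (hvol : ∀ t, 0 < t → μ {x | M x ≤ t} = ENNReal.ofReal t * c) (hT : 0 < T) :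
    (μ.map M).restrict (Set.Ioi T) = c • volume.restrict (Set.Ioi T) := by
  have hIoc (a b : ℝ) : (μ.map M).restrict (Set.Ioi T) (Set.Ioc a b) =
      ENNReal.ofReal (b - max a T) * c := by
    rw [Measure.restrict_apply measurableSet_Ioc, Set.Ioc_inter_Ioi,
      Measure.map_apply hM measurableSet_Ioc]
    rcases le_total (max a T) b with h | h
    · exact measure_preimage_Ioc_of_measure_sublevel hM hc hvol (lt_max_of_lt_right hT) h
    · rw [Set.Ioc_eq_empty h.not_gt, Set.preimage_empty, measure_empty,
        ENNReal.ofReal_of_nonpos (sub_nonpos.2 h), zero_mul]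
  refine Measure.ext_of_Ioc' _ _ (fun a b _ ↦ ?_) (fun a b _ ↦ ?_)
  · rw [hIoc]
    finiteness
  · rw [hIoc, Measure.smul_apply, Measure.restrict_apply measurableSet_Ioc, Set.Ioc_inter_Ioi,
      Real.volume_Ioc, smul_eq_mul, mul_comm]

theorem integrableOn_comp_preimage_Ioi_iff {E : Type*} [NormedAddCommGroup E] {f : ℝ → E}
    (hM : Measurable M) (hc₀ : c ≠ 0) (hc : c ≠ ∞)
    (hvol : ∀ t, 0 < t → μ {x | M x ≤ t} = ENNReal.ofReal t * c) (hT : 0 < T)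
    (hf : AEStronglyMeasurable f (volume.restrict (Set.Ioi T))) :
    IntegrableOn (f ∘ M) (M ⁻¹' Set.Ioi T) μ ↔ IntegrableOn f (Set.Ioi T) := by
  have hmap : (μ.restrict (M ⁻¹' Set.Ioi T)).map M = c • volume.restrict (Set.Ioi T) := by
    rw [← Measure.restrict_map hM measurableSet_Ioi,
      restrict_map_Ioi_eq_smul_volume hM hc hvol hT]
  rw [IntegrableOn, ← integrable_map_measure (hmap ▸ hf.smul_measure c) hM.aemeasurable, hmap,
    integrable_smul_measure hc₀ hc, IntegrableOn]

end LinearVolumeGrowth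

/-- `N` is a homogeneous gauge of homogeneous dimension `Q` for the dilations `δ t`, `t > 0`, in the
sense of homogeneous norms on graded spaces: it is definite, has bounded unit ball, and scales
linearly under `δ t`, whose Jacobian is `t ^ Q`. Unlike a homogeneous norm, it
comes with no triangle inequality, and `δ` need not be a one-parameter group; `δ t` is junk for
`t ≤ 0`. -/
structure IsHomogeneousGauge {V : Type*} [NormedAddCommGroup V] [NormedSpace ℝ V]
    (N : V → ℝ) (δ : ℝ → V →ₗ[ℝ] V) (Q : ℝ) : Prop where
  continuous : Continuous N
  pos : ∀ x, x ≠ 0 → 0 < N x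
  isBounded : Bornology.IsBounded {x | N x ≤ 1}
  map_dilation : ∀ t, 0 < t → ∀ x, N (δ t x) = t * N x
  det_dilation : ∀ t, 0 < t → LinearMap.det (δ t) = t ^ Q

namespace IsHomogeneousGauge

variable {V W : Type*} [NormedAddCommGroup V] [NormedSpace ℝ V] [NormedAddCommGroup W]
  [NormedSpace ℝ W] {N : V → ℝ} {N' : W → ℝ} {δ : ℝ → V →ₗ[ℝ] V} {δ' : ℝ → W →ₗ[ℝ] W} {Q Q' : ℝ}

theorem apply_zero (h : IsHomogeneousGauge N δ Q) : N 0 = 0 := by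
  have h2 := h.map_dilation 2 two_pos 0
  rw [map_zero] at h2
  linarith

theorem nonneg (h : IsHomogeneousGauge N δ Q) (x : V) : 0 ≤ N x := by
  rcases eq_or_ne x 0 with rfl | hx
  · exact h.apply_zero.ge
  · exact (h.pos x hx).le

section Constructions

theorem norm_rpow {a : ℝ} (ha : 0 < a) :
    IsHomogeneousGauge (fun x : V ↦ ‖x‖ ^ a) (fun t ↦ t ^ (1 / a) • LinearMap.id)
      (Module.finrank ℝ V / a) where
  continuous := continuous_norm.rpow_const fun _ ↦ .inr ha.le
  pos x hx := rpow_pos_of_pos (norm_pos_iff.2 hx) a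
  isBounded := by
    refine Metric.isBounded_closedBall (x := (0 : V)) (r := 1) |>.subset fun x hx ↦ ?_
    rw [mem_closedBall_zero_iff]
    exact (rpow_le_rpow_iff (norm_nonneg x) zero_le_one ha).1 (by rwa [one_rpow])
  map_dilation t ht x := by
    rw [LinearMap.smul_apply, LinearMap.id_apply, norm_smul, norm_of_nonneg (by positivity),
      mul_rpow (by positivity) (norm_nonneg x), ← rpow_mul ht.le, one_div_mul_cancel ha.ne',
      rpow_one]
  det_dilation t ht := by
    rw [LinearMap.det_smul, LinearMap.det_id, mul_one, ← rpow_mul_natCast ht.le,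
      one_div_mul_eq_div]

theorem prod [FiniteDimensional ℝ V] [FiniteDimensional ℝ W] (h : IsHomogeneousGauge N δ Q)
    (h' : IsHomogeneousGauge N' δ' Q') :
    IsHomogeneousGauge (fun p : V × W ↦ N p.1 + N' p.2) (fun t ↦ (δ t).prodMap (δ' t))
      (Q + Q') where
  continuous := (h.continuous.comp continuous_fst).add (h'.continuous.comp continuous_snd)
  pos p hp := by
    rcases not_and_or.1 (mt Prod.mk_eq_zero.2 hp) with h₁ | h₂
    · exact add_pos_of_pos_of_nonneg (h.pos _ h₁) (h'.nonneg _)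
    · exact add_pos_of_nonneg_of_pos (h.nonneg _) (h'.pos _ h₂)
  isBounded := (h.isBounded.prod h'.isBounded).subset fun p hp ↦
    ⟨(le_add_of_nonneg_right (h'.nonneg _)).trans hp,
      (le_add_of_nonneg_left (h.nonneg _)).trans hp⟩
  map_dilation t ht p := by
    rw [LinearMap.prodMap_apply, h.map_dilation t ht, h'.map_dilation t ht, mul_add]
  det_dilation t ht := by
    rw [LinearMap.det_prodMap, h.det_dilation t ht, h'.det_dilation t ht, rpow_add ht]

theorem comp_continuousLinearEquiv (h : IsHomogeneousGauge N δ Q) (e : W ≃L[ℝ] V) :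
    IsHomogeneousGauge (N ∘ e) (fun t ↦ e.symm.toLinearEquiv.conj (δ t)) Q where
  continuous := h.continuous.comp e.continuous
  pos x hx := h.pos _ (e.map_ne_zero_iff.2 hx)
  isBounded := e.antilipschitz.isBounded_preimage h.isBounded
  map_dilation t ht x := by
    simp [LinearEquiv.conj_apply, h.map_dilation t ht]
  det_dilation t ht := by
    rw [LinearEquiv.conj_apply, LinearMap.comp_assoc, LinearMap.det_conj, h.det_dilation t ht]

end Constructions

section Integrability

theorem exists_lt_of_le_norm [FiniteDimensional ℝ V] (h : IsHomogeneousGauge N δ Q) {R : ℝ}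
    (hR : 0 < R) : ∃ T, 0 < T ∧ ∀ x, R ≤ ‖x‖ → T < N x := by
  have hclosed : IsClosed ({x | N x ≤ 1} ∩ {x | R ≤ ‖x‖}) :=
    (isClosed_le h.continuous continuous_const).inter (isClosed_le continuous_const continuous_norm)
  have hcompact : IsCompact ({x | N x ≤ 1} ∩ {x | R ≤ ‖x‖}) :=
    Metric.isCompact_of_isClosed_isBounded hclosed (h.isBounded.subset Set.inter_subset_left)
  obtain ⟨m, hm, hmN⟩ := hcompact.exists_forall_le' h.continuous.continuousOn
    fun x hx ↦ h.pos x (norm_pos_iff.1 (hR.trans_le hx.2))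
  refine ⟨min m 1 / 2, by positivity, fun x hx ↦ (half_lt_self (by positivity)).trans_le ?_⟩
  rcases le_total (N x) 1 with hx₁ | hx₁
  · exact min_le_of_left_le (hmN x ⟨hx₁, hx⟩)
  · exact min_le_of_right_le hx₁

theorem exists_le_norm_of_lt [FiniteDimensional ℝ V] (h : IsHomogeneousGauge N δ Q) (R : ℝ) :
    ∃ T, 0 < T ∧ ∀ x, T < N x → R ≤ ‖x‖ := by
  obtain ⟨T, hT⟩ :=
    (isCompact_closedBall (0 : V) R).exists_bound_of_continuousOn h.continuous.continuousOn
  refine ⟨max T 1, by positivity, fun x hx ↦ ?_⟩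
  contrapose! hx
  exact le_max_of_le_left ((le_norm_self _).trans (hT x (mem_closedBall_zero_iff.2 hx.le)))

theorem measure_unitBall_pos [MeasurableSpace V] (μ : Measure V) [μ.IsOpenPosMeasure]
    (h : IsHomogeneousGauge N δ Q) : 0 < μ {x | N x ≤ 1} :=
  calc
    0 < μ {x | N x < 1} :=
      (isOpen_lt h.continuous continuous_const).measure_pos μ ⟨0, by simp [h.apply_zero]⟩
    _ ≤ μ {x | N x ≤ 1} := measure_mono (Set.ofPred_subset_ofPred.2 fun _ ↦ le_of_lt)

variable [FiniteDimensional ℝ V] [MeasurableSpace V] [BorelSpace V] (μ : Measure V)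
  [μ.IsAddHaarMeasure]

theorem measure_sublevel (h : IsHomogeneousGauge N δ Q) {t : ℝ} (ht : 0 < t) :
    μ {x | N x ≤ t} = ENNReal.ofReal (t ^ Q) * μ {x | N x ≤ 1} := by
  have hdet : 0 < t ^ Q := rpow_pos_of_pos ht Q
  have hpre : {x | N x ≤ 1} = δ t ⁻¹' {x | N x ≤ t} := by
    ext x
    simp [h.map_dilation t ht, ht]
  rw [hpre, Measure.addHaar_preimage_linearMap μ (by rw [h.det_dilation t ht]; exact hdet.ne'),
    h.det_dilation t ht, abs_of_pos (inv_pos.2 hdet), ← mul_assoc, ← ENNReal.ofReal_mul hdet.le,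
    mul_inv_cancel₀ hdet.ne', ENNReal.ofReal_one, one_mul]

theorem measure_rpow_sublevel (h : IsHomogeneousGauge N δ Q) (hQ : 0 < Q) {t : ℝ} (ht : 0 < t) :
    μ {x | N x ^ Q ≤ t} = ENNReal.ofReal t * μ {x | N x ≤ 1} := by
  simp_rw [← le_rpow_inv_iff_of_pos (h.nonneg _) ht.le hQ]
  rw [h.measure_sublevel μ (rpow_pos_of_pos ht _), rpow_inv_rpow ht.le hQ.ne']

theorem integrableOn_superlevel_rpow_neg_iff (h : IsHomogeneousGauge N δ Q) (hQ : 0 < Q) {T : ℝ}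
    (hT : 0 < T) (s : ℝ) : IntegrableOn (fun x ↦ N x ^ (-s)) {x | T < N x} μ ↔ Q < s := by
  have hTQ : 0 < T ^ Q := rpow_pos_of_pos hT Q
  have hset : {x | T < N x} = (fun x ↦ N x ^ Q) ⁻¹' Set.Ioi (T ^ Q) := by
    ext x
    exact (rpow_lt_rpow_iff hT.le (h.nonneg x) hQ).symm
  have hfun : (fun x ↦ N x ^ (-s)) = (fun t ↦ t ^ (-s / Q)) ∘ fun x ↦ N x ^ Q := by
    ext x
    rw [Function.comp_apply, ← rpow_mul (h.nonneg x), mul_div_cancel₀ _ hQ.ne']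
  rw [hset, hfun, integrableOn_comp_preimage_Ioi_iff (h.continuous.measurable.pow_const Q)
    (h.measure_unitBall_pos μ).ne' h.isBounded.measure_lt_top.ne
    (fun t ht ↦ h.measure_rpow_sublevel μ hQ ht) hTQ
    (Measurable.pow_const measurable_id' _).aestronglyMeasurable, integrableOn_Ioi_rpow_iff hTQ,
    div_lt_iff₀ hQ, neg_one_mul, neg_lt_neg_iff]

theorem integrableOn_rpow_neg_iff (h : IsHomogeneousGauge N δ Q) (hQ : 0 < Q) {R : ℝ} (hR : 0 < R)
    (s : ℝ) : IntegrableOn (fun x ↦ N x ^ (-s)) {x | R ≤ ‖x‖} μ ↔ Q < s := by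
  constructor
  · intro hint
    obtain ⟨T, hT, hsub⟩ := h.exists_le_norm_of_lt R
    exact (h.integrableOn_superlevel_rpow_neg_iff μ hQ hT s).1 (hint.mono_set hsub)
  · intro hs
    obtain ⟨T, hT, hsub⟩ := h.exists_lt_of_le_norm hR
    exact ((h.integrableOn_superlevel_rpow_neg_iff μ hQ hT s).2 hs).mono_set hsub

end Integrability

end IsHomogeneousGauge

/-- The splitting `x ↦ (x⊥, x₃)` of `ℝ³`, with the Euclidean norm on the plane of `x⊥`. -/
noncomputable def perpSplitting :
    EuclideanSpace ℝ (Fin 3) ≃L[ℝ] EuclideanSpace ℝ (Fin 2) × ℝ :=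
  LinearEquiv.toContinuousLinearEquiv
    { toFun x := (!₂[x 0, x 1], x 2)
      invFun p := !₂[p.1 0, p.1 1, p.2]
      map_add' x y := by ext i <;> [fin_cases i; skip] <;> simp
      map_smul' c x := by ext i <;> [fin_cases i; skip] <;> simp
      left_inv x := by ext i; fin_cases i <;> simp
      right_inv p := by ext i <;> [fin_cases i; skip] <;> simp }

theorem norm_perpSplitting_fst (x : EuclideanSpace ℝ (Fin 3)) :
    ‖(perpSplitting x).1‖ = √(x 0 ^ 2 + x 1 ^ 2) := by
  simp [perpSplitting, EuclideanSpace.norm_eq]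

theorem norm_perpSplitting_snd (x : EuclideanSpace ℝ (Fin 3)) : ‖(perpSplitting x).2‖ = |x 2| :=
  rfl

theorem uFun_eq_mul_norm_perpSplitting (g α β γ : ℝ) : uFun g α β γ = fun x ↦ g *
    (‖(perpSplitting x).1‖ ^ (2 * α / β) + ‖(perpSplitting x).2‖ ^ (2 * γ / β)) ^ (-(β / 2)) := by
  ext x
  rw [uFun, norm_perpSplitting_fst, norm_perpSplitting_snd]

theorem uFun_integrable_atInfinity_iff_general {g α β γ : ℝ} (hg : g ≠ 0) (hα : 0 < α)
    (hβ : 0 < β) (hγ : 0 < γ) {R : ℝ} (hR : 0 < R) :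
    IntegrableOn (uFun g α β γ) {x : EuclideanSpace ℝ (Fin 3) | R ≤ ‖x‖} volume ↔
      2 / α + 1 / γ < 1 := by
  have ha : 0 < 2 * α / β := by positivity
  have hb : 0 < 2 * γ / β := by positivity
  have hgauge := ((IsHomogeneousGauge.norm_rpow (V := EuclideanSpace ℝ (Fin 2)) ha).prod
    (IsHomogeneousGauge.norm_rpow (V := ℝ) hb)).comp_continuousLinearEquiv perpSplitting
  rw [finrank_euclideanSpace_fin, Module.finrank_self, Nat.cast_ofNat, Nat.cast_one] at hgauge
  have hQ : 2 / (2 * α / β) + 1 / (2 * γ / β) = β / 2 * (2 / α + 1 / γ) := by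
    field_simp
  rw [uFun_eq_mul_norm_perpSplitting, IntegrableOn, integrable_const_mul_iff (IsUnit.mk0 g hg)]
  refine (hgauge.integrableOn_rpow_neg_iff volume (by positivity) hR (β / 2)).trans ?_
  rw [hQ, mul_lt_iff_lt_one_right (half_pos hβ)]

theorem two_div_add_one_div_lt_one_iff {α γ : ℝ} (hα : 2 < α) (hγ : 0 < γ) :
    2 / α + 1 / γ < 1 ↔ α / (α - 2) < γ := by
  have hα₀ : 0 < α := two_pos.trans hα
  rw [div_add_div _ _ hα₀.ne' hγ.ne', div_lt_one (mul_pos hα₀ hγ), div_lt_iff₀ (sub_pos.2 hα)]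
  constructor <;> intro h <;> linarith

/-- `u` is integrable outside any ball around the origin iff `γ > α/(α-2)`. -/
theorem uFun_integrable_atInfinity_iff (g α β γ : ℝ) (hg : 0 < g) (hα : 2 < α)
    (hβ : 0 < β) (hγ : 0 < γ) (R : ℝ) (hR : 0 < R) :
    IntegrableOn (uFun g α β γ) {x : EuclideanSpace ℝ (Fin 3) | R ≤ ‖x‖} volume ↔
      α / (α - 2) < γ :=
  (uFun_integrable_atInfinity_iff_general hg.ne' (two_pos.trans hα) hβ hγ hR).trans
    (two_div_add_one_div_lt_one_iff hα hγ)
end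

section
/- With u(x) = g·(|x⊥|^{2α/β} + |x₃|^{2γ/β})^{-β/2} on ℝ³, g > 0, α > 2, β > 0, α/(α-2) < γ < 3α/(α-2), and η = 3αγ/(2γ+α), one has ∫_{ℝ³} (1 - e^{-u(x)}) dx = 2π · g^{3/η} · (βη)/(3αγ) · Γ(β/α)·Γ(β/(2γ))/Γ(3β/(2η)) · Γ((η-3)/η). -/
open MeasureTheory Real Filter

/-!
The measures with density `t ^ (s - 1) / Γ(s)` on `(0, ∞)` form a convolution semigroup in `s`: this
is Euler's Beta integral. The push-forward of a Haar measure on an `m`-dimensional normed space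
under `‖·‖ ^ a` gives the interval `(-∞, t]` the volume of a ball, which is proportional to
`t ^ (m / a)`, so it is a multiple of the semigroup measure of index `m / a`. Hence the push-forward
of a product measure under `‖x‖ ^ a + ‖y‖ ^ b` is a multiple of the one of index `m / a + n / b`.
With `ℝ³ = ℂ × ℝ`, what remains is a one-dimensional integral, which a substitution and an
integration by parts reduce to the Gamma function.
-/

open Set Metric Module
open scoped ENNReal Topology

theorem ext_of_Iic_ne_top {μ ν : Measure ℝ} (hμ : ∀ a, μ (Iic a) ≠ ∞)
    (h : ∀ a, μ (Iic a) = ν (Iic a)) : μ = ν := by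
  have cover : ⋃ n : ℕ, Iic (n : ℝ) = univ :=
    iUnion_eq_univ_iff.2 fun x => exists_nat_ge x
  refine Measure.ext_of_iUnion_eq_univ cover fun n => ?_
  have : IsFiniteMeasure (μ.restrict (Iic n)) := isFiniteMeasure_restrict.2 (hμ n)
  refine Measure.ext_of_Iic _ _ fun a => ?_
  rw [Measure.restrict_apply measurableSet_Iic, Measure.restrict_apply measurableSet_Iic,
    Iic_inter_Iic, h]

/-- The kernel `t ^ (s - 1) / Γ(s)` of the Riemann–Liouville fractional integral of order `s`,
extended by zero to `t ≤ 0` so that the semigroup law is a convolution over all of `ℝ`. -/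
noncomputable def riemannLiouvilleKernel (s t : ℝ) : ℝ≥0∞ :=
  (Ioi 0).indicator (fun t => ENNReal.ofReal (t ^ (s - 1) / Gamma s)) t

/-- The measure on `ℝ` with density `riemannLiouvilleKernel s`, the convolution semigroup in which
the push-forwards of Haar measures under powers of norms live. -/
noncomputable def riemannLiouvilleMeasure (s : ℝ) : Measure ℝ :=
  volume.withDensity (riemannLiouvilleKernel s)

instance (s : ℝ) : SFinite (riemannLiouvilleMeasure s) := by
  unfold riemannLiouvilleMeasure
  infer_instance

section RiemannLiouville

variable {s s' : ℝ}

theorem riemannLiouvilleKernel_of_pos (s : ℝ) {t : ℝ} (ht : 0 < t) :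
    riemannLiouvilleKernel s t = ENNReal.ofReal (t ^ (s - 1) / Gamma s) :=
  indicator_of_mem (mem_Ioi.2 ht) _

theorem riemannLiouvilleKernel_of_nonpos (s : ℝ) {t : ℝ} (ht : t ≤ 0) :
    riemannLiouvilleKernel s t = 0 :=
  indicator_of_notMem (notMem_Ioi.2 ht) _

@[fun_prop]
theorem measurable_riemannLiouvilleKernel (s : ℝ) : Measurable (riemannLiouvilleKernel s) :=
  Measurable.indicator (by fun_prop) measurableSet_Ioi

theorem riemannLiouvilleMeasure_Iic (hs : 0 < s) (t : ℝ) :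
    riemannLiouvilleMeasure s (Iic t) = ENNReal.ofReal (max t 0 ^ s / Gamma (s + 1)) := by
  have hpow : IntervalIntegrable (fun x : ℝ => x ^ (s - 1)) volume 0 (max t 0) :=
    intervalIntegral.intervalIntegrable_rpow' (by linarith)
  have hIoc : Ioi 0 ∩ Iic t = Ioc 0 (max t 0) := by grind
  rw [riemannLiouvilleMeasure, withDensity_apply _ measurableSet_Iic]
  unfold riemannLiouvilleKernel
  rw [setLIntegral_indicator measurableSet_Ioi, hIoc, ← ofReal_integral_eq_lintegral_ofReal,
    ← intervalIntegral.integral_of_le (le_max_right t 0), intervalIntegral.integral_div,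
    integral_rpow (.inl (by linarith)), sub_add_cancel, zero_rpow hs.ne', sub_zero,
    Gamma_add_one hs.ne', div_div]
  · exact ((intervalIntegrable_iff_integrableOn_Ioc_of_le (le_max_right t 0)).1 hpow).div_const _
  · filter_upwards [ae_restrict_mem measurableSet_Ioc] with x hx
    have := hx.1
    positivity

theorem riemannLiouvilleKernel_mul_riemannLiouvilleKernel (hs : 0 < s) (hs' : 0 < s') {x : ℝ}
    (hx : 0 < x) (z : ℝ) :
    riemannLiouvilleKernel s (x * z) * riemannLiouvilleKernel s' (x * (1 - z)) =
      ENNReal.ofReal (x ^ (s + s' - 2) / Gamma (s + s')) * ProbabilityTheory.betaPDF s s' z := by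
  rw [ProbabilityTheory.betaPDF_eq]
  by_cases hz : 0 < z ∧ z < 1
  · obtain ⟨hz₀, hz₁⟩ := hz
    have hz' : 0 < 1 - z := sub_pos.2 hz₁
    have hxpow : x ^ (s + s' - 2) = x ^ (s - 1) * x ^ (s' - 1) := by
      rw [← rpow_add hx]
      ring_nf
    rw [if_pos ⟨hz₀, hz₁⟩, ProbabilityTheory.beta,
      riemannLiouvilleKernel_of_pos s (mul_pos hx hz₀),
      riemannLiouvilleKernel_of_pos s' (mul_pos hx hz'), ← ENNReal.ofReal_mul (by positivity),
      ← ENNReal.ofReal_mul (by positivity), mul_rpow hx.le hz₀.le, mul_rpow hx.le hz'.le, hxpow]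
    congr 1
    field_simp
  · rw [if_neg hz, ENNReal.ofReal_zero, mul_zero, mul_eq_zero]
    rcases not_and_or.1 hz with hz₀ | hz₁
    · exact .inl (riemannLiouvilleKernel_of_nonpos s (by nlinarith))
    · exact .inr (riemannLiouvilleKernel_of_nonpos s' (by nlinarith))

theorem riemannLiouvilleKernel_lconvolution_riemannLiouvilleKernel (hs : 0 < s) (hs' : 0 < s') :
    riemannLiouvilleKernel s ⋆ₗ riemannLiouvilleKernel s' = riemannLiouvilleKernel (s + s') := by
  ext x
  rw [lconvolution_def]
  rcases le_or_gt x 0 with hx | hx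
  · have hzero (y : ℝ) : riemannLiouvilleKernel s y * riemannLiouvilleKernel s' (-y + x) = 0 := by
      rcases le_or_gt y 0 with hy | hy
      · rw [riemannLiouvilleKernel_of_nonpos s hy, zero_mul]
      · rw [riemannLiouvilleKernel_of_nonpos s' (by linarith), mul_zero]
    simp_rw [hzero, lintegral_zero, riemannLiouvilleKernel_of_nonpos _ hx]
  · calc ∫⁻ y, riemannLiouvilleKernel s y * riemannLiouvilleKernel s' (-y + x)
        = ENNReal.ofReal x *
            ∫⁻ z, riemannLiouvilleKernel s (x * z) * riemannLiouvilleKernel s' (x * (1 - z)) := by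
          conv_lhs => rw [← Real.smul_map_volume_mul_left hx.ne']
          rw [lintegral_smul_measure, abs_of_pos hx, lintegral_map (by fun_prop) (by fun_prop),
            smul_eq_mul]
          ring_nf
      _ = ENNReal.ofReal x * ENNReal.ofReal (x ^ (s + s' - 2) / Gamma (s + s')) := by
          simp_rw [riemannLiouvilleKernel_mul_riemannLiouvilleKernel hs hs' hx]
          rw [lintegral_const_mul' _ _ ENNReal.ofReal_ne_top,
            ProbabilityTheory.lintegral_betaPDF_eq_one hs hs', mul_one]
      _ = riemannLiouvilleKernel (s + s') x := by
          rw [riemannLiouvilleKernel_of_pos _ hx, ← ENNReal.ofReal_mul hx.le, ← mul_div_assoc,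
            mul_comm x, ← rpow_add_one hx.ne']
          ring_nf

theorem riemannLiouvilleMeasure_conv_riemannLiouvilleMeasure (hs : 0 < s) (hs' : 0 < s') :
    riemannLiouvilleMeasure s ∗ riemannLiouvilleMeasure s' = riemannLiouvilleMeasure (s + s') := by
  simp only [riemannLiouvilleMeasure]
  rw [conv_withDensity_eq_lconvolution (measurable_riemannLiouvilleKernel s)
      (measurable_riemannLiouvilleKernel s'),
    riemannLiouvilleKernel_lconvolution_riemannLiouvilleKernel hs hs']

theorem integral_riemannLiouvilleMeasure {G : Type*} [NormedAddCommGroup G] [NormedSpace ℝ G]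
    (hs : 0 < s) (f : ℝ → G) :
    ∫ t, f t ∂riemannLiouvilleMeasure s = (Gamma s)⁻¹ • ∫ t in Ioi 0, t ^ (s - 1) • f t := by
  have hfinite (t : ℝ) : riemannLiouvilleKernel s t < ∞ := by
    rcases le_or_gt t 0 with ht | ht
    · simp [riemannLiouvilleKernel_of_nonpos s ht]
    · simp [riemannLiouvilleKernel_of_pos s ht]
  rw [riemannLiouvilleMeasure, integral_withDensity_eq_integral_toReal_smul
    (measurable_riemannLiouvilleKernel s) (.of_forall hfinite),
    ← integral_indicator measurableSet_Ioi, ← integral_smul]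
  refine integral_congr_ae (.of_forall fun t => ?_)
  rcases le_or_gt t 0 with ht | ht
  · simp [riemannLiouvilleKernel_of_nonpos s ht, ht]
  · simp only [riemannLiouvilleKernel_of_pos s ht, indicator_of_mem (mem_Ioi.2 ht)]
    rw [ENNReal.toReal_ofReal (by positivity), smul_smul, div_eq_inv_mul]

end RiemannLiouville

theorem isBigO_one_sub_exp_neg_mul_nhdsGT_zero (g : ℝ) :
    (fun t => 1 - exp (-(g * t))) =O[𝓝[>] 0] (fun t : ℝ => t) := by
  have hdiff : DifferentiableAt ℝ (fun t => 1 - exp (-(g * t))) 0 := by fun_prop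
  simpa using hdiff.isBigO_sub.mono nhdsWithin_le_nhds

theorem isBigO_one_sub_exp_neg_mul_atTop {g : ℝ} (hg : 0 < g) :
    (fun t => 1 - exp (-(g * t))) =O[atTop] (fun _ => (1 : ℝ)) := by
  have hlim : Tendsto (fun t => 1 - exp (-(g * t))) atTop (𝓝 (1 - 0)) :=
    tendsto_const_nhds.sub (tendsto_exp_neg_atTop_nhds_zero.comp (tendsto_id.const_mul_atTop hg))
  exact hlim.isBigO_one ℝ

theorem integrableOn_rpow_mul_one_sub_exp_neg_mul {g σ : ℝ} (hg : 0 < g) (hσ₀ : 0 < σ)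
    (hσ₁ : σ < 1) :
    IntegrableOn (fun t => t ^ (-σ - 1) * (1 - exp (-(g * t)))) (Ioi 0) := by
  have hcont : Continuous fun t => 1 - exp (-(g * t)) := by fun_prop
  refine mellin_convergent_of_isBigO_scalar (a := 0) (b := -1)
    (hcont.locallyIntegrable.locallyIntegrableOn _) ?_ (by linarith) ?_ (by linarith)
  · simpa using isBigO_one_sub_exp_neg_mul_atTop hg
  · simpa using isBigO_one_sub_exp_neg_mul_nhdsGT_zero g

theorem tendsto_rpow_neg_mul_one_sub_exp_neg_mul_nhdsGT_zero (g : ℝ) {σ : ℝ} (hσ : σ < 1) :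
    Tendsto (fun t => t ^ (-σ) * (1 - exp (-(g * t)))) (𝓝[>] 0) (𝓝 0) := by
  have hbound := (Asymptotics.isBigO_refl (fun t : ℝ => t ^ (-σ)) (𝓝[>] 0)).mul
    (isBigO_one_sub_exp_neg_mul_nhdsGT_zero g)
  refine hbound.trans_tendsto (Tendsto.congr' (f₁ := fun t : ℝ => t ^ (1 - σ)) ?_ ?_)
  · filter_upwards [self_mem_nhdsWithin] with t (ht : 0 < t)
    rw [← rpow_add_one ht.ne', neg_add_eq_sub]
  · have hcont : ContinuousAt (fun t : ℝ => t ^ (1 - σ)) 0 :=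
      continuousAt_rpow_const _ _ (.inr (by linarith))
    simpa [zero_rpow (sub_pos.2 hσ).ne'] using hcont.tendsto.mono_left nhdsWithin_le_nhds

theorem tendsto_rpow_neg_mul_one_sub_exp_neg_mul_atTop {g σ : ℝ} (hg : 0 < g) (hσ : 0 < σ) :
    Tendsto (fun t => t ^ (-σ) * (1 - exp (-(g * t)))) atTop (𝓝 0) := by
  have hbound := (Asymptotics.isBigO_refl (fun t : ℝ => t ^ (-σ)) atTop).mul
    (isBigO_one_sub_exp_neg_mul_atTop hg)
  exact hbound.trans_tendsto (by simpa using tendsto_rpow_neg_atTop hσ)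

theorem integral_rpow_neg_mul_mul_exp_neg_mul {g σ : ℝ} (hg : 0 < g) (hσ : σ < 1) :
    ∫ t in Ioi 0, t ^ (-σ) * (g * exp (-(g * t))) = g ^ σ * Gamma (1 - σ) := by
  have hscale := integral_rpow_mul_exp_neg_mul_Ioi (sub_pos.2 hσ) hg
  rw [sub_sub_cancel_left, one_div, inv_rpow hg.le, ← rpow_neg hg.le, neg_sub,
    rpow_sub_one hg.ne'] at hscale
  simp_rw [mul_left_comm _ g]
  rw [integral_const_mul, hscale]
  field_simp

theorem integral_rpow_mul_one_sub_exp_neg_mul {g σ : ℝ} (hg : 0 < g) (hσ₀ : 0 < σ) (hσ₁ : σ < 1) :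
    ∫ t in Ioi 0, t ^ (-σ - 1) * (1 - exp (-(g * t))) = g ^ σ * Gamma (1 - σ) / σ := by
  have hexp : IntegrableOn (fun t : ℝ => t ^ (-σ) * (g * exp (-(g * t)))) (Ioi 0) := by
    refine IntegrableOn.congr_fun ((integrableOn_rpow_mul_exp_neg_mul_rpow (s := -σ)
      (by linarith) one_pos hg).const_mul g) (fun t _ => ?_) measurableSet_Ioi
    simp only [rpow_one, neg_mul]
    ring
  have hparts := integral_Ioi_mul_deriv_eq_deriv_mul
    (u := fun t : ℝ => t ^ (-σ)) (u' := fun t => -σ * t ^ (-σ - 1))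
    (v := fun t => 1 - exp (-(g * t))) (v' := fun t => g * exp (-(g * t)))
    (fun t ht => hasDerivAt_rpow_const (.inl (ne_of_gt ht)))
    (fun t _ => by
      simpa [mul_comm] using ((hasDerivAt_id t).const_mul g).neg.exp.const_sub 1)
    hexp
    (IntegrableOn.congr_fun
      ((integrableOn_rpow_mul_one_sub_exp_neg_mul hg hσ₀ hσ₁).const_mul (-σ))
      (fun t _ => (mul_assoc _ _ _).symm) measurableSet_Ioi)
    (tendsto_rpow_neg_mul_one_sub_exp_neg_mul_nhdsGT_zero g hσ₁)
    (tendsto_rpow_neg_mul_one_sub_exp_neg_mul_atTop hg hσ₀)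
  simp_rw [integral_rpow_neg_mul_mul_exp_neg_mul hg hσ₁, mul_assoc (-σ)] at hparts
  rw [integral_const_mul] at hparts
  rw [eq_div_iff hσ₀.ne', hparts]
  ring

theorem integral_rpow_mul_one_sub_exp_neg_mul_rpow_neg {g p s : ℝ} (hg : 0 < g) (hs : 0 < s)
    (hsp : s < p) :
    ∫ t in Ioi 0, t ^ (s - 1) * (1 - exp (-(g * t ^ (-p)))) =
      g ^ (s / p) * Gamma (1 - s / p) / s := by
  have hp : 0 < p := hs.trans hsp
  have hsubst := integral_comp_rpow_Ioi
    (fun u => u ^ (-(s / p) - 1) * (1 - exp (-(g * u)))) (neg_ne_zero.2 hp.ne')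
  have hintegrand : ∀ t ∈ Ioi (0 : ℝ), (|-p| * t ^ (-p - 1)) •
      ((t ^ (-p)) ^ (-(s / p) - 1) * (1 - exp (-(g * t ^ (-p))))) =
      p * (t ^ (s - 1) * (1 - exp (-(g * t ^ (-p))))) := by
    intro t (ht : 0 < t)
    have hpow : t ^ (-p - 1) * (t ^ (-p)) ^ (-(s / p) - 1) = t ^ (s - 1) := by
      rw [← rpow_mul ht.le, ← rpow_add ht]
      congr 1
      field_simp
      ring
    rw [smul_eq_mul, abs_neg, abs_of_pos hp, ← hpow]
    ring
  rw [integral_rpow_mul_one_sub_exp_neg_mul hg (by positivity) ((div_lt_one hp).2 hsp),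
    setIntegral_congr_fun measurableSet_Ioi hintegrand, integral_const_mul] at hsubst
  field_simp at hsubst ⊢
  linarith

theorem setOf_norm_rpow_le {E : Type*} [SeminormedAddCommGroup E] {a t : ℝ} (ha : 0 < a)
    (ht : 0 ≤ t) : {x : E | ‖x‖ ^ a ≤ t} = closedBall 0 (t ^ a⁻¹) := by
  ext x
  simp [le_rpow_inv_iff_of_pos (norm_nonneg x) ht ha]

theorem finrank_div_pos (E : Type*) [AddCommGroup E] [Module ℝ E] [Module.Finite ℝ E]
    [Nontrivial E] {a : ℝ} (ha : 0 < a) : 0 < finrank ℝ E / a :=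
  div_pos (Nat.cast_pos.2 finrank_pos) ha

section NormPowers

variable {E F : Type*} [NormedAddCommGroup E] [NormedSpace ℝ E] [FiniteDimensional ℝ E]
  [Nontrivial E] [MeasurableSpace E] [BorelSpace E] (μ : Measure E) [μ.IsAddHaarMeasure]
  [NormedAddCommGroup F] [NormedSpace ℝ F] [FiniteDimensional ℝ F]
  [Nontrivial F] [MeasurableSpace F] [BorelSpace F] (ν : Measure F) [ν.IsAddHaarMeasure]
  {a b : ℝ}

theorem map_norm_rpow_Iic (ha : 0 < a) (t : ℝ) :
    μ.map (‖·‖ ^ a) (Iic t) = ENNReal.ofReal (max t 0 ^ (finrank ℝ E / a)) * μ (ball 0 1) := by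
  rw [Measure.map_apply (by fun_prop) measurableSet_Iic]
  change μ {x : E | ‖x‖ ^ a ≤ t} = _
  rcases lt_or_ge t 0 with ht | ht
  · have hempty : {x : E | ‖x‖ ^ a ≤ t} = ∅ :=
      eq_empty_of_forall_notMem fun x hx => (hx.trans_lt ht).not_ge (by positivity)
    rw [hempty, max_eq_right ht.le, zero_rpow (finrank_div_pos E ha).ne', measure_empty,
      ENNReal.ofReal_zero, zero_mul]
  · rw [setOf_norm_rpow_le ha ht, μ.addHaar_closedBall _ (by positivity), max_eq_left ht,
      ← rpow_mul_natCast ht, inv_mul_eq_div]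

theorem map_norm_rpow (ha : 0 < a) :
    μ.map (‖·‖ ^ a) =
      (μ (ball 0 1) * ENNReal.ofReal (Gamma (finrank ℝ E / a + 1))) •
        riemannLiouvilleMeasure (finrank ℝ E / a) := by
  have hE := finrank_div_pos E ha
  have hGamma : 0 < Gamma (finrank ℝ E / a + 1) := Gamma_pos_of_pos (by positivity)
  refine ext_of_Iic_ne_top (fun t => ?_) fun t => ?_
  · rw [map_norm_rpow_Iic μ ha]
    finiteness
  · rw [map_norm_rpow_Iic μ ha, Measure.smul_apply, riemannLiouvilleMeasure_Iic hE, smul_eq_mul,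
      mul_assoc, ← ENNReal.ofReal_mul hGamma.le, mul_div_cancel₀ _ hGamma.ne', mul_comm]

theorem map_add_norm_rpow (ha : 0 < a) (hb : 0 < b) :
    (μ.prod ν).map (fun p => ‖p.1‖ ^ a + ‖p.2‖ ^ b) =
      (μ (ball 0 1) * ENNReal.ofReal (Gamma (finrank ℝ E / a + 1)) *
        (ν (ball 0 1) * ENNReal.ofReal (Gamma (finrank ℝ F / b + 1)))) •
        riemannLiouvilleMeasure (finrank ℝ E / a + finrank ℝ F / b) := by
  have hconv : (μ.prod ν).map (fun p => ‖p.1‖ ^ a + ‖p.2‖ ^ b) =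
      μ.map (‖·‖ ^ a) ∗ ν.map (‖·‖ ^ b) := by
    rw [Measure.conv, Measure.map_prod_map _ _ (by fun_prop) (by fun_prop),
      Measure.map_map (by fun_prop) (by fun_prop)]
    rfl
  rw [hconv, map_norm_rpow μ ha, map_norm_rpow ν hb, Measure.conv_smul_left,
    Measure.conv_smul_right, smul_smul, riemannLiouvilleMeasure_conv_riemannLiouvilleMeasure
      (finrank_div_pos E ha) (finrank_div_pos F hb)]

theorem integral_add_norm_rpow {G : Type*} [NormedAddCommGroup G] [NormedSpace ℝ G] (ha : 0 < a)
    (hb : 0 < b) {f : ℝ → G} (hf : StronglyMeasurable f) :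
    ∫ p, f (‖p.1‖ ^ a + ‖p.2‖ ^ b) ∂μ.prod ν =
      (μ.real (ball 0 1) * Gamma (finrank ℝ E / a + 1) *
        (ν.real (ball 0 1) * Gamma (finrank ℝ F / b + 1)) /
          Gamma (finrank ℝ E / a + finrank ℝ F / b)) •
        ∫ t in Ioi 0, t ^ (finrank ℝ E / a + finrank ℝ F / b - 1) • f t := by
  have hE := finrank_div_pos E ha
  have hF := finrank_div_pos F hb
  have hGammaE : 0 ≤ Gamma (finrank ℝ E / a + 1) := Gamma_nonneg_of_nonneg (by positivity)
  have hGammaF : 0 ≤ Gamma (finrank ℝ F / b + 1) := Gamma_nonneg_of_nonneg (by positivity)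
  rw [← integral_map (φ := fun p : E × F => ‖p.1‖ ^ a + ‖p.2‖ ^ b) (by fun_prop)
    hf.aestronglyMeasurable, map_add_norm_rpow μ ν ha hb, integral_smul_measure,
    integral_riemannLiouvilleMeasure (add_pos hE hF), smul_smul, ← div_eq_mul_inv]
  simp only [ENNReal.toReal_mul, ENNReal.toReal_ofReal hGammaE, ENNReal.toReal_ofReal hGammaF,
    Measure.real]

theorem integral_one_sub_exp_neg_mul_add_norm_rpow {g p s : ℝ} (ha : 0 < a) (hb : 0 < b)
    (hg : 0 < g) (hs : s = finrank ℝ E / a + finrank ℝ F / b) (hsp : s < p) :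
    ∫ x, (1 - exp (-(g * (‖x.1‖ ^ a + ‖x.2‖ ^ b) ^ (-p)))) ∂μ.prod ν =
      μ.real (ball 0 1) * Gamma (finrank ℝ E / a + 1) *
        (ν.real (ball 0 1) * Gamma (finrank ℝ F / b + 1)) / Gamma (s + 1) *
        (g ^ (s / p) * Gamma (1 - s / p)) := by
  have hs₀ : 0 < s := hs ▸ add_pos (finrank_div_pos E ha) (finrank_div_pos F hb)
  have hf : StronglyMeasurable fun t => 1 - exp (-(g * t ^ (-p))) :=
    Measurable.stronglyMeasurable (by fun_prop)
  rw [integral_add_norm_rpow μ ν ha hb hf, ← hs]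
  simp_rw [smul_eq_mul]
  rw [integral_rpow_mul_one_sub_exp_neg_mul_rpow_neg hg hs₀ hsp, Gamma_add_one hs₀.ne']
  field_simp

end NormPowers

theorem integral_euclideanSpace_fin_three {G : Type*} [NormedAddCommGroup G] [NormedSpace ℝ G]
    (f : ℝ → ℝ → G) :
    ∫ x : EuclideanSpace ℝ (Fin 3), f (√(x 0 ^ 2 + x 1 ^ 2)) |x 2| =
      ∫ p : ℂ × ℝ, f ‖p.1‖ ‖p.2‖ := by
  have hpi := (EuclideanSpace.volume_preserving_symm_measurableEquiv_toLp (Fin 3)).trans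
    (volume_preserving_piFinSuccAbove (fun _ => ℝ) 2)
  have hprod : MeasurePreserving (MeasurableEquiv.prodCongr (.refl ℝ) Complex.measurableEquivPi) :=
    (MeasurePreserving.id volume).prod Complex.volume_preserving_equiv_pi
  have hswap : MeasurePreserving (MeasurableEquiv.prodComm : ℝ × ℂ ≃ᵐ ℂ × ℝ) :=
    Measure.measurePreserving_swap
  rw [← (hpi.trans (hprod.symm.trans hswap)).integral_comp' fun p : ℂ × ℝ => f ‖p.1‖ ‖p.2‖]
  refine integral_congr_ae (.of_forall fun x => ?_)
  change _ = f ‖(x 0 + x 1 * Complex.I : ℂ)‖ ‖x 2‖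
  rw [Complex.norm_add_mul_I, norm_eq_abs]

theorem integral_one_sub_exp_neg_mul_euclideanSpace_fin_three {a b g p s : ℝ} (ha : 0 < a)
    (hb : 0 < b) (hg : 0 < g) (hs : s = 2 / a + 1 / b) (hsp : s < p) :
    ∫ x : EuclideanSpace ℝ (Fin 3),
        (1 - exp (-(g * (√(x 0 ^ 2 + x 1 ^ 2) ^ a + |x 2| ^ b) ^ (-p)))) =
      2 * π * (Gamma (2 / a + 1) * Gamma (1 / b + 1) / Gamma (s + 1)) *
        (g ^ (s / p) * Gamma (1 - s / p)) := by
  have hdisc : (volume : Measure ℂ).real (ball 0 1) = π := by simp [Measure.real]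
  have hinterval : (volume : Measure ℝ).real (ball 0 1) = 2 := by norm_num [Measure.real]
  rw [integral_euclideanSpace_fin_three
      (fun r z => 1 - exp (-(g * (r ^ a + z ^ b) ^ (-p)))), Measure.volume_eq_prod,
    integral_one_sub_exp_neg_mul_add_norm_rpow volume volume ha hb hg (by simpa using hs) hsp,
    hdisc, hinterval]
  simp only [Complex.finrank_real_complex, finrank_self, Nat.cast_one, Nat.cast_ofNat]
  ring

theorem three_lt_of_div_sub_two_lt {α γ : ℝ} (hα : 2 < α) (hγ : α / (α - 2) < γ) :
    3 < 3 * α * γ / (2 * γ + α) := by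
  have hγ₀ : 0 < γ := (div_pos (by linarith) (sub_pos.2 hα)).trans hγ
  rw [div_lt_iff₀ (sub_pos.2 hα)] at hγ
  rw [lt_div_iff₀ (by positivity)]
  linarith

theorem integral_one_sub_exp_neg_u_general (g α β γ η : ℝ) (hg : 0 < g) (hα : 2 < α) (hβ : 0 < β)
    (hγ : α / (α - 2) < γ) (hη : η = 3 * α * γ / (2 * γ + α)) :
    ∫ x : EuclideanSpace ℝ (Fin 3), (1 - exp (-(uFun g α β γ x))) =
      2 * π * g ^ (3 / η) * (β * η) / (3 * α * γ) *
        (Gamma (β / α) * Gamma (β / (2 * γ)) / Gamma (3 * β / (2 * η))) *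
        Gamma ((η - 3) / η) := by
  have hα₀ : 0 < α := two_pos.trans hα
  have hγ₀ : 0 < γ := (div_pos hα₀ (sub_pos.2 hα)).trans hγ
  have hη₃ : 3 < η := hη ▸ three_lt_of_div_sub_two_lt hα hγ
  have hs_add : 3 * β / (2 * η) = 2 / (2 * α / β) + 1 / (2 * γ / β) := by
    rw [hη]
    field_simp
  have hs_lt : 3 * β / (2 * η) < β / 2 := by
    rw [div_lt_div_iff₀ (by positivity) two_pos]
    nlinarith
  have hs_div : 3 * β / (2 * η) / (β / 2) = 3 / η := by field_simp
  simp only [uFun]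
  rw [integral_one_sub_exp_neg_mul_euclideanSpace_fin_three (by positivity) (by positivity) hg
      hs_add hs_lt, hs_div, show 2 / (2 * α / β) = β / α by field_simp,
    show 1 / (2 * γ / β) = β / (2 * γ) by field_simp, show 1 - 3 / η = (η - 3) / η by field_simp,
    Gamma_add_one (by positivity), Gamma_add_one (by positivity), Gamma_add_one (by positivity)]
  field_simp

/-- Explicit evaluation of `∫_{ℝ³} (1 - e^{-u(x)}) dx` in terms of Gamma functions. -/
theorem integral_one_sub_exp_neg_u (g α β γ η : ℝ) (hg : 0 < g) (hα : 2 < α) (hβ : 0 < β)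
    (hγ₁ : α / (α - 2) < γ) (hγ₂ : γ < 3 * α / (α - 2))
    (hη : η = 3 * α * γ / (2 * γ + α)) :
    ∫ x : EuclideanSpace ℝ (Fin 3), (1 - Real.exp (-(uFun g α β γ x))) =
      2 * π * g ^ (3 / η) * (β * η) / (3 * α * γ) *
        (Real.Gamma (β / α) * Real.Gamma (β / (2 * γ)) / Real.Gamma (3 * β / (2 * η))) *
        Real.Gamma ((η - 3) / η) :=
  integral_one_sub_exp_neg_u_general g α β γ η hg hα hβ hγ₁ hη
end
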